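/- Let ρ = |ψ⟩⟨ψ| be an n-qubit pure state and S ⊆ Fin n nonempty with |S| = s. Fix ε > 0 and δ ∈ (0,1), and set N_B = ⌈8 log(1/δ)⌉ and B = ⌈4 (3/2)^s / ε²⌉, L = N_B·B. Consider L independent rounds: in round l, U_l = ⊗_{i∈S} U_{l,i} is a product of independent Haar-random elements of U(2) and, conditionally on U_l, the outcomes Z_{l,1}, Z_{l,2} are i.i.d. with law P_{U_l}(z) = tr(U_l ρ U_l† |z⟩⟨z|). For each batch b ∈ {1,…,N_B}, define the batch mean C̄^(b) = 1 − (3/2)^s · (1/B) Σ_{l=(b−1)B+1}^{bB} 1{Z_{l,1} = Z_{l,2}}. Then P( |median(C̄^(1), …, C̄^(N_B)) − C_ψ(S)| ≥ ε ) ≤ δ. -/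

import Mathlib

open Matrix MeasureTheory
open scoped BigOperators ComplexConjugate Kronecker

/-- `n`-qubit operators: matrices indexed by functions `Fin n → Fin 2`. -/
abbrev QMat (n : ℕ) : Type := Matrix (Fin n → Fin 2) (Fin n → Fin 2) ℂ

/-- Combine an assignment on `α` and one on its complement into a full index. -/
noncomputable def embedIdx {n : ℕ} (α : Finset (Fin n)) (i : {x : Fin n // x ∈ α} → Fin 2)
    (k : {x : Fin n // x ∉ α} → Fin 2) : Fin n → Fin 2 :=
  fun x => if h : x ∈ α then i ⟨x, h⟩ else k ⟨x, h⟩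

/-- The reduced density matrix on the qubits in `α` (partial trace over the rest). -/
noncomputable def reduced {n : ℕ} (ρ : QMat n) (α : Finset (Fin n)) :
    Matrix ({x : Fin n // x ∈ α} → Fin 2) ({x : Fin n // x ∈ α} → Fin 2) ℂ :=
  fun i j => ∑ k : ({x : Fin n // x ∉ α} → Fin 2), ρ (embedIdx α i k) (embedIdx α j k)

/-- The concentratable entanglement `C_ψ(S) = 1 - 2^{-|S|} ∑_{α ⊆ S} tr(ρ_α²)`. -/
noncomputable def CE {n : ℕ} (ρ : QMat n) (S : Finset (Fin n)) : ℝ :=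
  1 - (1 / 2 : ℝ) ^ S.card *
    ∑ α ∈ S.powerset, (Matrix.trace (reduced ρ α * reduced ρ α)).re

/-- Tensor product of single-qubit operators on the qubits in `S`, identity elsewhere. -/
noncomputable def localOp {n : ℕ} (S : Finset (Fin n))
    (V : {i : Fin n // i ∈ S} → Matrix (Fin 2) (Fin 2) ℂ) : QMat n :=
  fun x y => ∏ i : Fin n,
    if h : i ∈ S then V ⟨i, h⟩ (x i) (y i)
    else (if x i = y i then 1 else 0)

/-- Projector onto computational basis state `z` on the qubits in `S`, identity elsewhere. -/
noncomputable def projZ {n : ℕ} (S : Finset (Fin n)) (z : {i : Fin n // i ∈ S} → Fin 2) : QMat n :=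
  fun x y => ∏ i : Fin n,
    if h : i ∈ S then (if x i = z ⟨i, h⟩ ∧ y i = z ⟨i, h⟩ then 1 else 0)
    else (if x i = y i then 1 else 0)

noncomputable instance : MeasurableSpace (Matrix.unitaryGroup (Fin 2) ℂ) := borel _
instance : BorelSpace (Matrix.unitaryGroup (Fin 2) ℂ) := ⟨rfl⟩

/-- The Born probability `P_U(z) = tr(U ρ U† |z⟩⟨z|)` of outcome `z` after the local
randomized measurement given by the single-qubit unitaries `V i`, `i ∈ S`. -/
noncomputable def born {n : ℕ} (ρ : QMat n) (S : Finset (Fin n))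
    (V : {i : Fin n // i ∈ S} → Matrix.unitaryGroup (Fin 2) ℂ)
    (z : {i : Fin n // i ∈ S} → Fin 2) : ℝ :=
  (Matrix.trace (localOp S (fun i => (V i : Matrix (Fin 2) (Fin 2) ℂ)) * ρ *
      (localOp S (fun i => (V i : Matrix (Fin 2) (Fin 2) ℂ)))ᴴ * projZ S z)).re

/-- The Born distribution on outcome strings, as a measure. -/
noncomputable def bornMeasure {n : ℕ} (ρ : QMat n) (S : Finset (Fin n))
    (V : {i : Fin n // i ∈ S} → Matrix.unitaryGroup (Fin 2) ℂ) :
    Measure ({i : Fin n // i ∈ S} → Fin 2) :=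
  ∑ z : ({i : Fin n // i ∈ S} → Fin 2), ENNReal.ofReal (born ρ S V z) • Measure.dirac z

/-- Joint law of one round of the LRM experiment: a tuple of Haar-random single-qubit
unitaries together with `K` conditionally i.i.d. Born-distributed outcomes. -/
noncomputable def jointRound {n : ℕ} (μ : Measure (Matrix.unitaryGroup (Fin 2) ℂ))
    (ρ : QMat n) (S : Finset (Fin n)) (K : ℕ) :
    Measure (({i : Fin n // i ∈ S} → Matrix.unitaryGroup (Fin 2) ℂ) ×
      (Fin K → ({i : Fin n // i ∈ S} → Fin 2))) :=
  (Measure.pi fun _ : {i : Fin n // i ∈ S} => μ).bind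
    (fun V => (Measure.pi fun _ : Fin K => bornMeasure ρ S V).map (Prod.mk V))

/-- `m₀` is a median of `x₁, …, x_m`: at least half of the `xᵢ` satisfy `xᵢ ≤ m₀` and at
least half satisfy `xᵢ ≥ m₀`. -/
def IsMedian {m : ℕ} (x : Fin m → ℝ) (m₀ : ℝ) : Prop :=
  m ≤ 2 * (Finset.univ.filter fun i => x i ≤ m₀).card ∧
  m ≤ 2 * (Finset.univ.filter fun i => m₀ ≤ x i).card

/-- Independent coordinates over a product index set are the same as independent blocks of
independent coordinates. -/
lemma measurePreserving_uncurry_pi {ι κ Ω : Type*} [Fintype ι] [Fintype κ] [MeasurableSpace Ω]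
    (ν : Measure Ω) [IsProbabilityMeasure ν] :
    MeasurePreserving (fun (f : ι → κ → Ω) (p : ι × κ) => f p.1 p.2)
      (Measure.pi fun _ : ι => Measure.pi fun _ : κ => ν) (Measure.pi fun _ : ι × κ => ν) := by
  have hm : Measurable (fun (f : ι → κ → Ω) (p : ι × κ) => f p.1 p.2) := by fun_prop
  refine ⟨hm, (Measure.pi_eq fun s hs => ?_).symm⟩
  rw [Measure.map_apply hm (MeasurableSet.univ_pi hs)]
  have : (fun (f : ι → κ → Ω) (p : ι × κ) => f p.1 p.2) ⁻¹' Set.univ.pi s =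
      Set.univ.pi fun b => Set.univ.pi fun l => s (b, l) := by
    ext f; simp [Prod.forall]
  simp_rw [this, Measure.pi_pi, Fintype.prod_prod_type]

/-- Numerical form of the Chernoff exponent of a `Bin(N, 1/4)` variable at `N / 2`. -/
lemma sqrt_three_div_two_pow_le {N : ℕ} {δ : ℝ} (hδ : 0 < δ) (hN : 8 * Real.log (1 / δ) ≤ N) :
    (3 / 2 : ℝ) ^ N / √3 ^ N ≤ δ := by
  have h3 : √3 * √3 = 3 := Real.mul_self_sqrt (by norm_num)
  have hs : 0 < √3 := by positivity
  have hexp : Real.exp (1 / 4) ≤ 4 / 3 := by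
    have h := Real.one_sub_le_exp_neg (1 / 4)
    rw [Real.exp_neg] at h
    have h' := inv_anti₀ (by norm_num) h
    rw [inv_inv] at h'
    norm_num at h' ⊢
    exact h'
  have hbase : (3 / 2 : ℝ) / √3 ≤ Real.exp (-(1 / 8)) := by
    rw [div_le_iff₀ hs]
    refine (sq_le_sq₀ (by positivity) (by positivity)).1 ?_
    rw [mul_pow, ← Real.exp_nat_mul, sq √3, h3]
    have h' : Real.exp ((2 : ℕ) * -(1 / 8)) = (Real.exp (1 / 4))⁻¹ := by
      rw [← Real.exp_neg]; norm_num
    rw [h']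
    have h'' := inv_anti₀ (Real.exp_pos _) hexp
    linarith
  rw [← div_pow]
  calc ((3 / 2 : ℝ) / √3) ^ N ≤ Real.exp (-(1 / 8)) ^ N := by gcongr
    _ = Real.exp (-(N / 8)) := by rw [← Real.exp_nat_mul]; ring_nf
    _ ≤ Real.exp (Real.log δ) := by
      apply Real.exp_le_exp.2
      rw [one_div, Real.log_inv] at hN
      linarith
    _ = δ := Real.exp_log hδ

/-- Chernoff bound: if each of `N` independent events has probability at most `1/4`, at least half
of them occur with probability at most `(√3 / 2) ^ N`. -/
lemma pi_half_bad_le {E : Type*} [MeasurableSpace E] (P : Measure E) [IsProbabilityMeasure P]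
    {A : Set E} (hA : MeasurableSet A) (hPA : P.real A ≤ 1 / 4) {N : ℕ} {δ : ℝ} (hδ : 0 < δ)
    (hN : 8 * Real.log (1 / δ) ≤ N) [DecidablePred (· ∈ A)] :
    (Measure.pi fun _ : Fin N => P)
      {ω | N ≤ 2 * (Finset.univ.filter fun b => ω b ∈ A).card} ≤ ENNReal.ofReal δ := by
  set Q := Measure.pi fun _ : Fin N => P
  set g : E → ℝ := fun x => 1 + A.indicator (fun _ => 2) x
  have hg1 : ∀ x, 1 ≤ g x := fun x => by
    simp only [g, le_add_iff_nonneg_right]; exact Set.indicator_nonneg (by simp) x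
  have hg0 : ∀ x, 0 ≤ g x := fun x => zero_le_one.trans (hg1 x)
  have hint : Integrable (fun x => A.indicator (fun _ => (2 : ℝ)) x) P :=
    (integrable_const _).indicator hA
  have hgint : Integrable g P := (integrable_const _).add hint
  have hEg : ∫ x, g x ∂P ≤ 3 / 2 := by
    simp only [g]
    rw [integral_add (integrable_const _) hint, integral_indicator_const _ hA]
    simp only [integral_const, probReal_univ, smul_eq_mul]
    linarith
  have hEQ : ∫ ω : Fin N → E, ∏ b, g (ω b) ∂Q ≤ (3 / 2) ^ N := by
    rw [integral_fintype_prod_eq_prod (fun _ => g), Finset.prod_const, Finset.card_univ,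
      Fintype.card_fin]
    exact pow_le_pow_left₀ (integral_nonneg hg0) hEg N
  have hval : ∀ ω : Fin N → E,
      ∏ b, g (ω b) = 3 ^ (Finset.univ.filter fun b => ω b ∈ A).card := fun ω => by
    rw [← Finset.prod_const, Finset.prod_filter]
    refine Finset.prod_congr rfl fun b _ => ?_
    by_cases h : ω b ∈ A <;> simp [g, h]; norm_num
  have hmarkov := mul_meas_ge_le_integral_of_nonneg (μ := Q) (f := fun ω => ∏ b, g (ω b))
    (Filter.Eventually.of_forall fun ω => Finset.prod_nonneg fun b _ => hg0 _)
    (Integrable.fintype_prod (f := fun _ => g) fun _ => hgint) (√3 ^ N)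
  have hsub : {ω : Fin N → E | N ≤ 2 * (Finset.univ.filter fun b => ω b ∈ A).card} ⊆
      {ω | √3 ^ N ≤ ∏ b, g (ω b)} := fun ω hω => by
    simp only [Set.mem_ofPred_eq] at hω ⊢
    rw [hval]
    calc √3 ^ N ≤ √3 ^ (2 * _) := pow_le_pow_right₀ (Real.one_le_sqrt.2 (by norm_num)) hω
      _ = _ := by rw [pow_mul, Real.sq_sqrt (by norm_num)]
  have hpos : (0 : ℝ) < √3 ^ N := by positivity
  refine (measure_mono hsub).trans ?_
  rw [← ofReal_measureReal]
  refine ENNReal.ofReal_le_ofReal (le_trans ?_ (sqrt_three_div_two_pow_le hδ hN))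
  rw [le_div_iff₀' hpos]
  exact hmarkov.trans hEQ

/-- Median-of-means: with `N ≥ 8 log (1/δ)` batches of `B ≥ 4 Var X / ε²` samples, every median of
the batch means is within `ε` of the mean with probability at least `1 - δ`. -/
lemma medianOfMeans_le {Ω : Type*} [MeasurableSpace Ω] (ν : Measure Ω) [IsProbabilityMeasure ν]
    {X : Ω → ℝ} (hXm : Measurable X) (hX : MemLp X 2 ν) {ε δ : ℝ} (hε : 0 < ε) (hδ : 0 < δ)
    {N B : ℕ} (hN : 8 * Real.log (1 / δ) ≤ N) (hB : 0 < B)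
    (hvar : 4 * ProbabilityTheory.variance X ν ≤ B * ε ^ 2)
    (med : (Fin N → ℝ) → ℝ) (hmed : ∀ x, IsMedian x (med x)) :
    (Measure.pi fun _ : Fin N × Fin B => ν)
      {ω | ε ≤ |med (fun b => (1 / (B : ℝ)) * ∑ l, X (ω (b, l))) - ∫ x, X x ∂ν|} ≤
      ENNReal.ofReal δ := by
  classical
  set m := ∫ x, X x ∂ν
  set P := Measure.pi fun _ : Fin B => ν
  have hB' : (0 : ℝ) < B := by exact_mod_cast hB
  set Y : (Fin B → Ω) → ℝ := fun x => (1 / (B : ℝ)) * ∑ l, X (x l)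
  have hYm : Measurable Y := by fun_prop
  have hXl : ∀ l : Fin B, MemLp (fun x : Fin B → Ω => X (x l)) 2 P := fun l =>
    hX.comp_measurePreserving (measurePreserving_eval (fun _ : Fin B => ν) l)
  have hY : MemLp Y 2 P := (memLp_finsetSum _ fun l _ => hXl l).const_mul _
  have hEY : ∫ x, Y x ∂P = m := by
    simp only [Y]
    rw [integral_const_mul, integral_finsetSum _ fun l _ => (hXl l).integrable one_le_two]
    have : ∀ l : Fin B, ∫ x : Fin B → Ω, X (x l) ∂P = m := fun l =>
      integral_comp_eval (μ := fun _ : Fin B => ν) (i := l) hX.aestronglyMeasurable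
    simp only [this]
    simp
    field_simp
  have hVY : ProbabilityTheory.variance Y P = ProbabilityTheory.variance X ν / B := by
    have h := ProbabilityTheory.variance_sum_pi (μ := fun _ : Fin B => ν) (X := fun _ => X)
      fun _ => hX
    simp only [Y]
    rw [ProbabilityTheory.variance_const_mul]
    have h2 : (fun x : Fin B → Ω => ∑ l, X (x l)) = ∑ l, fun x : Fin B → Ω => X (x l) := by
      ext; simp
    rw [h2, h]
    simp
    field_simp
  set A : Set (Fin B → Ω) := {x | ε ≤ |Y x - m|}
  have hA : MeasurableSet A := measurableSet_le measurable_const (by fun_prop)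
  have hPA : P.real A ≤ 1 / 4 := by
    have h := ProbabilityTheory.meas_ge_le_variance_div_sq hY hε
    rw [hEY, hVY] at h
    have h' := ENNReal.toReal_mono ENNReal.ofReal_ne_top h
    rw [ENNReal.toReal_ofReal (div_nonneg (div_nonneg (ProbabilityTheory.variance_nonneg _ _)
      hB'.le) (sq_nonneg _))] at h'
    refine h'.trans ?_
    rw [div_div, div_le_iff₀ (by positivity)]
    linarith
  have hmp := measurePreserving_uncurry_pi (ι := Fin N) (κ := Fin B) ν
  have hbad : MeasurableSet {ω : Fin N × Fin B → Ω |
      N ≤ 2 * (Finset.univ.filter fun b => (fun l => ω (b, l)) ∈ A).card} := by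
    simp only [Finset.card_filter]
    refine measurableSet_le measurable_const (Measurable.const_mul (Finset.measurable_fun_sum _
      fun b _ => ?_) _)
    exact Measurable.ite ((by fun_prop : Measurable fun (ω : Fin N × Fin B → Ω) l => ω (b, l)) hA)
      measurable_const measurable_const
  refine (measure_mono fun ω hω => ?_).trans
    (((hmp.measure_preimage hbad.nullMeasurableSet).symm.trans_le (pi_half_bad_le P hA hPA hδ hN)))
  simp only [Set.mem_ofPred_eq] at hω ⊢
  obtain ⟨h1, h2⟩ := hmed fun b => Y fun l => ω (b, l)
  rcases le_abs.1 hω with h | h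
  · refine h2.trans (Nat.mul_le_mul_left 2 (Finset.card_le_card fun b hb => ?_))
    simp only [Finset.mem_filter, Finset.mem_univ, true_and] at hb ⊢
    exact le_abs.2 (Or.inl (h.trans (sub_le_sub_right hb m)))
  · refine h1.trans (Nat.mul_le_mul_left 2 (Finset.card_le_card fun b hb => ?_))
    simp only [Finset.mem_filter, Finset.mem_univ, true_and] at hb ⊢
    refine le_abs.2 (Or.inr (h.trans (neg_le_neg (sub_le_sub_right hb m))))

instance : CompactSpace (Matrix.unitaryGroup (Fin 2) ℂ) := by
  refine isCompact_iff_compactSpace.1 ?_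
  have hK : IsCompact (Set.univ.pi fun _ : Fin 2 => Set.univ.pi fun _ : Fin 2 =>
      Metric.closedBall (0 : ℂ) 1) :=
    isCompact_univ_pi fun _ => isCompact_univ_pi fun _ => isCompact_closedBall _ _
  refine IsCompact.of_isClosed_subset (X := Matrix (Fin 2) (Fin 2) ℂ) hK ?_ fun U hU => ?_
  · exact isClosed_unitary
  · exact fun i _ j _ => mem_closedBall_zero_iff.2 (entry_norm_bound_of_unitary hU i j)

/-- Haar probability measure on the compact group `U(2)` is right invariant. -/
lemma haar_isMulRightInvariant (μ : Measure (Matrix.unitaryGroup (Fin 2) ℂ)) [μ.IsHaarMeasure]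
    [IsProbabilityMeasure μ] : μ.IsMulRightInvariant :=
  ⟨fun g => by
    have : IsProbabilityMeasure (μ.map (· * g)) :=
      Measure.isProbabilityMeasure_map (by fun_prop)
    have : (μ.map (· * g)).IsHaarMeasure := Measure.isHaarMeasure_map_mul_right μ g
    exact Measure.isHaarMeasure_eq_of_isProbabilityMeasure _ _⟩

lemma integrable_of_continuous_unitary (μ : Measure (Matrix.unitaryGroup (Fin 2) ℂ))
    [IsProbabilityMeasure μ] {f : Matrix.unitaryGroup (Fin 2) ℂ → ℂ} (hf : Continuous f) :
    Integrable f μ :=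
  hf.integrable_of_hasCompactSupport (HasCompactSupport.of_compactSpace f)

lemma continuous_unitary_entry (i j : Fin 2) :
    Continuous fun V : Matrix.unitaryGroup (Fin 2) ℂ => (V : Matrix (Fin 2) (Fin 2) ℂ) i j :=
  continuous_subtype_val.matrix_elem i j

/-- Fourth moment of the entries of row `z` of a random unitary. -/
noncomputable def rowMoment (μ : Measure (Matrix.unitaryGroup (Fin 2) ℂ)) (z a b c d : Fin 2) : ℂ :=
  ∫ V, V.1 z a * star (V.1 z b) * (V.1 z c * star (V.1 z d)) ∂μ

lemma rowMoment_integrable (μ : Measure (Matrix.unitaryGroup (Fin 2) ℂ)) [IsProbabilityMeasure μ]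
    (z a b c d : Fin 2) : Integrable (fun V : Matrix.unitaryGroup (Fin 2) ℂ =>
      V.1 z a * star (V.1 z b) * (V.1 z c * star (V.1 z d))) μ := by
  have h := fun j => continuous_unitary_entry z j
  exact integrable_of_continuous_unitary μ
    (((h a).mul (h b).star).mul ((h c).mul (h d).star))

/-- Row moments are invariant under right multiplication by a fixed unitary `W`. -/
lemma rowMoment_eq_sum (μ : Measure (Matrix.unitaryGroup (Fin 2) ℂ)) [μ.IsHaarMeasure]
    [IsProbabilityMeasure μ] {W : Matrix (Fin 2) (Fin 2) ℂ} (hW : W ∈ Matrix.unitaryGroup (Fin 2) ℂ)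
    (z a b c d : Fin 2) :
    rowMoment μ z a b c d = ∑ a', ∑ b', ∑ c', ∑ d',
      W a' a * star (W b' b) * (W c' c * star (W d' d)) * rowMoment μ z a' b' c' d' := by
  have := haar_isMulRightInvariant μ
  rw [rowMoment, ← integral_mul_right_eq_self _ (⟨W, hW⟩ : Matrix.unitaryGroup (Fin 2) ℂ)]
  have hint := fun a b c d => (rowMoment_integrable μ z a b c d).const_mul
  simp only [rowMoment, ← integral_const_mul]
  simp_rw [← integral_finsetSum _ fun i _ => hint _ _ _ i _]
  simp_rw [← integral_finsetSum _ fun i _ => integrable_finsetSum _ fun j _ => hint _ _ i j _]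
  simp_rw [← integral_finsetSum _ fun i _ => integrable_finsetSum _ fun j _ =>
    integrable_finsetSum _ fun k _ => hint _ i j k _]
  simp_rw [← integral_finsetSum _ fun i _ => integrable_finsetSum _ fun j _ =>
    integrable_finsetSum _ fun k _ => integrable_finsetSum _ fun l _ => hint i j k l _]
  refine integral_congr_ae (Filter.Eventually.of_forall fun V => ?_)
  simp only [Submonoid.coe_mul, Matrix.mul_apply, Fin.sum_univ_two, star_add, star_mul']
  ring

lemma rowMoment_normalization (μ : Measure (Matrix.unitaryGroup (Fin 2) ℂ))
    [IsProbabilityMeasure μ] (z : Fin 2) : ∑ a, ∑ b, rowMoment μ z a a b b = 1 := by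
  simp only [rowMoment]
  simp_rw [← integral_finsetSum _ fun i _ => rowMoment_integrable μ z _ _ i i]
  simp_rw [← integral_finsetSum _ fun i _ => integrable_finsetSum _ fun j _ =>
    rowMoment_integrable μ z i i j j]
  have h1 : ∀ V : Matrix.unitaryGroup (Fin 2) ℂ,
      ∑ a, ∑ b, V.1 z a * star (V.1 z a) * (V.1 z b * star (V.1 z b)) = 1 := fun V => by
    have h := congrFun (congrFun (Matrix.mem_unitaryGroup_iff.1 V.2) z) z
    simp only [Matrix.mul_apply, Matrix.star_apply, Matrix.one_apply_eq] at h
    simp_rw [← Finset.mul_sum, h, mul_one, h]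
  simp only [h1]
  simp

/-- Second-moment Haar integral of a row of a random element of `U(2)`. -/
lemma rowMoment_eq (μ : Measure (Matrix.unitaryGroup (Fin 2) ℂ)) [μ.IsHaarMeasure]
    [IsProbabilityMeasure μ] (z a b c d : Fin 2) :
    rowMoment μ z a b c d = (1 / 6) * ((if a = b then 1 else 0) * (if c = d then 1 else 0) +
      (if a = d then 1 else 0) * (if c = b then 1 else 0)) := by
  have hphase : !![1, 0; 0, Complex.I] ∈ Matrix.unitaryGroup (Fin 2) ℂ := by
    rw [Matrix.mem_unitaryGroup_iff]
    ext i j; fin_cases i <;> fin_cases j <;> simp [Matrix.mul_apply, Matrix.star_apply]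
  have hswap : !![0, 1; 1, 0] ∈ Matrix.unitaryGroup (Fin 2) ℂ := by
    rw [Matrix.mem_unitaryGroup_iff]
    ext i j; fin_cases i <;> fin_cases j <;> simp [Matrix.mul_apply, Matrix.star_apply]
  have hrot : !![3 / 5, 4 / 5; -4 / 5, 3 / 5] ∈ Matrix.unitaryGroup (Fin 2) ℂ := by
    rw [Matrix.mem_unitaryGroup_iff]
    ext i j; fin_cases i <;> fin_cases j <;>
      simp [Matrix.mul_apply, Matrix.star_apply, map_ofNat] <;> norm_num
  have hp := rowMoment_eq_sum μ hphase z
  have hs := rowMoment_eq_sum μ hswap z 0 0 0 0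
  have hr := rowMoment_eq_sum μ hrot z 0 0 0 0
  have hn := rowMoment_normalization μ z
  have hc : ∀ a b c d, rowMoment μ z a b c d = rowMoment μ z c b a d := fun a b c d => by
    simp only [rowMoment]; congr 1; ext V; ring
  have hc' : ∀ a b c d, rowMoment μ z a b c d = rowMoment μ z a d c b := fun a b c d => by
    simp only [rowMoment]; congr 1; ext V; ring
  have hI : ∀ x : ℂ, x = Complex.I * x → x = 0 := fun x h => by
    linear_combination (1 + Complex.I) / 2 * h + x / 2 * Complex.I_sq
  have hI' : ∀ x : ℂ, x = -(Complex.I * x) → x = 0 := fun x h => by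
    linear_combination (1 - Complex.I) / 2 * h + x / 2 * Complex.I_sq
  have hz : ∀ a b c d, (a = b ∧ c = d ∨ a = d ∧ c = b) ∨ rowMoment μ z a b c d = 0 := by
    intro a b c d
    have h := hp a b c d
    fin_cases a <;> fin_cases b <;> fin_cases c <;> fin_cases d <;>
      simp [Fin.sum_univ_two] at h ⊢
    all_goals first | exact hI _ h | exact hI' _ h | exact self_eq_neg.1 h
  have zero := fun a b c d h => (hz a b c d).resolve_left h
  simp [Fin.sum_univ_two, map_ofNat] at hs hr hn
  have e1 := hc 0 0 1 1
  have e2 := hc' 0 0 1 1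
  have e3 := hc 1 1 0 0
  rw [zero 0 0 0 1 (by decide), zero 0 0 1 0 (by decide), zero 0 1 0 0 (by decide),
    zero 1 0 0 0 (by decide), zero 0 1 0 1 (by decide), zero 1 0 1 0 (by decide),
    zero 1 1 1 0 (by decide), zero 1 1 0 1 (by decide), zero 1 0 1 1 (by decide),
    zero 0 1 1 1 (by decide), ← hs, ← e1, e3, ← e2] at hr
  rw [← hs, e3, ← e2] at hn
  have v2 : rowMoment μ z 0 0 1 1 = 1 / 6 := by linear_combination (1/6) * hn - (625/864) * hr
  have v1 : rowMoment μ z 0 0 0 0 = 1 / 3 := by linear_combination (1/2) * hn - v2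
  clear hz hp hc hc' hr hn hI hI' hphase hswap hrot
  by_cases h : a = b ∧ c = d ∨ a = d ∧ c = b
  · clear zero
    fin_cases a <;> fin_cases b <;> fin_cases c <;> fin_cases d <;> simp at h ⊢
    · rw [v1]; norm_num
    · rw [v2]; norm_num
    · rw [← e2, v2]; norm_num
    · rw [← e1, v2]; norm_num
    · rw [e3, ← e2, v2]; norm_num
    · rw [← hs, v1]; norm_num
  · rw [zero a b c d h]
    clear zero
    fin_cases a <;> fin_cases b <;> fin_cases c <;> fin_cases d <;> simp at h ⊢

/-- Sums over function spaces of products factorize. -/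
lemma sum_fun_prod_eq {ι R : Type*} [Fintype ι] [DecidableEq ι] [CommSemiring R]
    (g : ι → Fin 2 → R) : ∑ x : ι → Fin 2, ∏ i, g i (x i) = ∏ i, ∑ a, g i a := by
  rw [Finset.prod_univ_sum, Fintype.piFinset_univ]

lemma prod_delta_eq {ι : Type*} [Fintype ι] [DecidableEq ι] (x y : ι → Fin 2) :
    (∏ i, if x i = y i then (1 : ℂ) else 0) = if x = y then 1 else 0 := by
  rw [Finset.prod_ite_zero]
  simp [funext_iff]

lemma localOp_conjTranspose_mul_self {n : ℕ} (S : Finset (Fin n))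
    (V : {i : Fin n // i ∈ S} → Matrix.unitaryGroup (Fin 2) ℂ) :
    (localOp S fun i => (V i).1)ᴴ * localOp S (fun i => (V i).1) = 1 := by
  ext x y
  simp only [Matrix.mul_apply, Matrix.conjTranspose_apply, localOp, star_prod,
    ← Finset.prod_mul_distrib]
  rw [sum_fun_prod_eq fun i a => star (if h : i ∈ S then (V ⟨i, h⟩).1 a (x i)
    else if a = x i then 1 else 0) * (if h : i ∈ S then (V ⟨i, h⟩).1 a (y i)
    else if a = y i then 1 else 0), Matrix.one_apply, ← prod_delta_eq]
  refine Finset.prod_congr rfl fun i _ => ?_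
  by_cases h : i ∈ S
  · simp only [h, dite_true]
    have hu := congrFun (congrFun (Matrix.mem_unitaryGroup_iff'.1 (V ⟨i, h⟩).2) (x i)) (y i)
    simpa only [Matrix.mul_apply, Matrix.star_apply, Matrix.one_apply] using hu
  · simp [h, eq_comm]

lemma projZ_eq_diagonal {n : ℕ} (S : Finset (Fin n)) (z : {i : Fin n // i ∈ S} → Fin 2) :
    projZ S z = Matrix.diagonal fun x => if (fun i : {i // i ∈ S} => x i) = z then 1 else 0 := by
  ext x y
  rw [projZ, Fintype.prod_dite, Matrix.diagonal_apply, Finset.prod_ite_zero, Finset.prod_ite_zero]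
  simp only [Finset.prod_const_one, ite_mul, one_mul, zero_mul, Finset.mem_univ, true_implies,
    ← ite_and]
  by_cases hxy : x = y
  · subst hxy
    simp [funext_iff]
  · rw [if_neg (c := x = y ∧ _) fun h => hxy h.1, if_neg]
    rintro ⟨h1, h2⟩
    refine hxy (funext fun i => ?_)
    by_cases hi : i ∈ S
    · rw [(h1 ⟨i, hi⟩).1, (h1 ⟨i, hi⟩).2]
    · exact h2 ⟨i, hi⟩

section BornRule

open scoped ComplexOrder

/-- The complex number whose real part is the Born probability. -/
noncomputable def bornTrace {n : ℕ} (ρ : QMat n) (S : Finset (Fin n))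
    (V : {i : Fin n // i ∈ S} → Matrix.unitaryGroup (Fin 2) ℂ)
    (z : {i : Fin n // i ∈ S} → Fin 2) : ℂ :=
  Matrix.trace (localOp S (fun i => (V i).1) * ρ * (localOp S fun i => (V i).1)ᴴ * projZ S z)

lemma bornTrace_eq_sum_diag {n : ℕ} (ρ : QMat n) (S : Finset (Fin n))
    (V : {i : Fin n // i ∈ S} → Matrix.unitaryGroup (Fin 2) ℂ)
    (z : {i : Fin n // i ∈ S} → Fin 2) :
    bornTrace ρ S V z = ∑ x, (localOp S (fun i => (V i).1) * ρ *
      (localOp S fun i => (V i).1)ᴴ) x x *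
        if (fun i : {i // i ∈ S} => x i) = z then 1 else 0 := by
  simp only [bornTrace, Matrix.trace, Matrix.diag, projZ_eq_diagonal, Matrix.mul_diagonal]

lemma bornTrace_nonneg {n : ℕ} {ρ : QMat n} (hρ : ρ.PosSemidef) (S : Finset (Fin n))
    (V : {i : Fin n // i ∈ S} → Matrix.unitaryGroup (Fin 2) ℂ)
    (z : {i : Fin n // i ∈ S} → Fin 2) : 0 ≤ bornTrace ρ S V z := by
  rw [bornTrace_eq_sum_diag]
  refine Finset.sum_nonneg fun x _ => mul_nonneg ?_ (by split_ifs <;> simp)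
  exact (hρ.mul_mul_conjTranspose_same _).diag_nonneg

lemma born_nonneg {n : ℕ} {ρ : QMat n} (hρ : ρ.PosSemidef) (S : Finset (Fin n))
    (V : {i : Fin n // i ∈ S} → Matrix.unitaryGroup (Fin 2) ℂ)
    (z : {i : Fin n // i ∈ S} → Fin 2) : 0 ≤ born ρ S V z :=
  (Complex.nonneg_iff.1 (bornTrace_nonneg hρ S V z)).1

lemma ofReal_born {n : ℕ} {ρ : QMat n} (hρ : ρ.PosSemidef) (S : Finset (Fin n))
    (V : {i : Fin n // i ∈ S} → Matrix.unitaryGroup (Fin 2) ℂ)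
    (z : {i : Fin n // i ∈ S} → Fin 2) : (born ρ S V z : ℂ) = bornTrace ρ S V z :=
  Complex.ext rfl (Complex.nonneg_iff.1 (bornTrace_nonneg hρ S V z)).2

lemma sum_born {n : ℕ} {ρ : QMat n} (hρ : ρ.trace = 1) (S : Finset (Fin n))
    (V : {i : Fin n // i ∈ S} → Matrix.unitaryGroup (Fin 2) ℂ) :
    ∑ z, born ρ S V z = 1 := by
  have h : ∑ z, bornTrace ρ S V z = 1 := by
    simp only [bornTrace_eq_sum_diag]
    rw [Finset.sum_comm]
    simp only [← Finset.mul_sum, Finset.sum_ite_eq, Finset.mem_univ, if_true, mul_one]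
    change Matrix.trace _ = 1
    rw [Matrix.trace_mul_comm, ← Matrix.mul_assoc, localOp_conjTranspose_mul_self, Matrix.one_mul,
      hρ]
  have h' := congrArg Complex.re h
  rwa [Complex.re_sum] at h'

/-- The Born probabilities as a sum over pairs of basis states. -/
lemma bornTrace_eq_sum {n : ℕ} (ρ : QMat n) (S : Finset (Fin n))
    (V : {i : Fin n // i ∈ S} → Matrix.unitaryGroup (Fin 2) ℂ)
    (z : {i : Fin n // i ∈ S} → Fin 2) :
    bornTrace ρ S V z = ∑ y, ∑ y', ρ y y' *
      ((∏ i : {i // i ∉ S}, if y i = y' i then 1 else 0) *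
        ∏ i : {i // i ∈ S}, (V i).1 (z i) (y i) * star ((V i).1 (z i) (y' i))) := by
  rw [bornTrace_eq_sum_diag]
  simp only [Matrix.mul_apply, Matrix.conjTranspose_apply, Finset.sum_mul]
  rw [Finset.sum_comm, Finset.sum_comm (γ := Fin n → Fin 2) (s := Finset.univ (α := Fin n → Fin 2))
    (f := fun y y' => ρ y y' * _)]
  refine Finset.sum_congr rfl fun y' _ => ?_
  rw [Finset.sum_comm]
  refine Finset.sum_congr rfl fun y _ => ?_
  have hz : ∀ x : Fin n → Fin 2, (if (fun i : {i // i ∈ S} => x i) = z then (1 : ℂ) else 0) =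
      ∏ i, if h : i ∈ S then (if x i = z ⟨i, h⟩ then 1 else 0) else 1 := fun x => by
    rw [Fintype.prod_dite, Finset.prod_ite_zero]
    simp [funext_iff]
  have hcomm : ∀ x : Fin n → Fin 2, localOp S (fun i => (V i).1) x y * ρ y y' *
      star (localOp S (fun i => (V i).1) x y') *
        (if (fun i : {i // i ∈ S} => x i) = z then 1 else 0) =
      ρ y y' * ∏ i, (if h : i ∈ S then (V ⟨i, h⟩).1 (x i) (y i) *
        star ((V ⟨i, h⟩).1 (x i) (y' i)) * (if x i = z ⟨i, h⟩ then 1 else 0)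
        else (if x i = y i then 1 else 0) * (if x i = y' i then 1 else 0)) := fun x => by
    rw [mul_right_comm _ (ρ y y'), mul_right_comm _ (ρ y y'), mul_comm, hz]
    simp only [localOp, star_prod, ← Finset.prod_mul_distrib]
    congr 1
    refine Finset.prod_congr rfl fun i _ => ?_
    by_cases h : i ∈ S
    · simp [h]
    · by_cases h1 : x i = y i <;> by_cases h2 : x i = y' i <;> simp [h, h1, h2]
  simp only [hcomm, ← Finset.mul_sum]
  rw [sum_fun_prod_eq fun i a => (if h : i ∈ S then (V ⟨i, h⟩).1 a (y i) *
        star ((V ⟨i, h⟩).1 a (y' i)) * (if a = z ⟨i, h⟩ then 1 else 0)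
        else (if a = y i then 1 else 0) * (if a = y' i then 1 else 0))]
  congr 1
  have hsplit := Fintype.prod_dite (fun i (h : i ∈ S) => (V ⟨i, h⟩).1 (z ⟨i, h⟩) (y i) *
    star ((V ⟨i, h⟩).1 (z ⟨i, h⟩) (y' i))) fun i _ => if y i = y' i then (1 : ℂ) else 0
  rw [mul_comm] at hsplit
  refine Eq.trans ?_ (hsplit.trans (by congr!))
  refine Finset.prod_congr rfl fun i _ => ?_
  by_cases h : i ∈ S <;> simp [h, eq_comm]

end BornRule

lemma sum_embedIdx {n : ℕ} {M : Type*} [AddCommMonoid M] (α : Finset (Fin n))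
    (f : (Fin n → Fin 2) → M) : ∑ y, f y = ∑ i, ∑ k, f (embedIdx α i k) := by
  rw [← Fintype.sum_prod_type', ← (Equiv.piEquivPiSubtypeProd (· ∈ α) fun _ => Fin 2).symm.sum_comp]
  rfl

lemma embedIdx_of_mem {n : ℕ} {α : Finset (Fin n)} (i k) (x : {x : Fin n // x ∈ α}) :
    embedIdx α i k x = i x := by
  simp [embedIdx]

lemma embedIdx_of_notMem {n : ℕ} {α : Finset (Fin n)} (i k) (x : {x : Fin n // x ∉ α}) :
    embedIdx α i k x = k x := by
  simp [embedIdx, x.2]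

lemma trace_reduced_sq {n : ℕ} (ρ : QMat n) (α : Finset (Fin n)) :
    (reduced ρ α * reduced ρ α).trace = ∑ i, ∑ k, ∑ j, ∑ l,
      ρ (embedIdx α i k) (embedIdx α j k) * ρ (embedIdx α j l) (embedIdx α i l) := by
  simp only [Matrix.trace, Matrix.diag, Matrix.mul_apply, reduced, Finset.sum_mul_sum]
  exact Finset.sum_congr rfl fun i _ => Finset.sum_comm

/-- The purity of a reduced state as a swap expectation on two copies. -/
lemma trace_reduced_sq_eq_swap {n : ℕ} (ρ : QMat n) (α : Finset (Fin n)) :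
    ∑ y, ∑ y', ∑ w, ∑ w', ρ y y' * ρ w w' * ∏ i, (if i ∈ α then
      (if y i = w' i then 1 else 0) * (if w i = y' i then 1 else 0) else
      (if y i = y' i then 1 else 0) * (if w i = w' i then 1 else 0)) =
      (reduced ρ α * reduced ρ α).trace := by
  have hprod : ∀ y y' w w' : Fin n → Fin 2, (∏ i, (if i ∈ α then
      (if y i = w' i then (1 : ℂ) else 0) * (if w i = y' i then 1 else 0) else
      (if y i = y' i then 1 else 0) * (if w i = w' i then 1 else 0))) =
      ((∏ i : {i // i ∈ α}, if y i = w' i then 1 else 0) *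
        ∏ i : {i // i ∈ α}, if w i = y' i then 1 else 0) *
      ((∏ i : {i // i ∉ α}, if y i = y' i then 1 else 0) *
        ∏ i : {i // i ∉ α}, if w i = w' i then 1 else 0) := fun y y' w w' => by
    simp only [← Finset.prod_mul_distrib]
    have := Fintype.prod_dite (fun i (_ : i ∈ α) =>
      (if y i = w' i then (1 : ℂ) else 0) * (if w i = y' i then 1 else 0)) fun i _ =>
      (if y i = y' i then (1 : ℂ) else 0) * (if w i = w' i then 1 else 0)
    refine Eq.trans ?_ (this.trans (by congr!))
    simp
  simp only [hprod, sum_embedIdx α, embedIdx_of_mem, embedIdx_of_notMem, prod_delta_eq]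
  rw [trace_reduced_sq]
  refine Finset.sum_congr rfl fun i _ => Finset.sum_congr rfl fun k _ =>
    Finset.sum_congr rfl fun j _ => ?_
  simp only [mul_ite, mul_one, mul_zero, ← ite_and]
  rw [Finset.sum_eq_single k (fun x _ h => by simp [h.symm]) (by simp),
    Finset.sum_eq_single j (fun x _ h => by simp [h]) (by simp)]
  refine Finset.sum_congr rfl fun l _ => ?_
  rw [Finset.sum_eq_single i (fun x _ h => by simp [h.symm]) (by simp),
    Finset.sum_eq_single l (fun x _ h => by simp [h.symm]) (by simp)]
  simp

lemma purity_le_one {n : ℕ} (ψ : (Fin n → Fin 2) → ℂ) (hψ : ∑ x, ‖ψ x‖ ^ 2 = 1)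
    (α : Finset (Fin n)) :
    (reduced (Matrix.vecMulVec ψ (star ψ)) α * reduced (Matrix.vecMulVec ψ (star ψ)) α).trace.re
      ≤ 1 := by
  rw [trace_reduced_sq]
  refine (Complex.re_le_norm _).trans ?_
  set e := embedIdx α
  have hterm : ∀ i k j l, ‖Matrix.vecMulVec ψ (star ψ) (e i k) (e j k) *
      Matrix.vecMulVec ψ (star ψ) (e j l) (e i l)‖ ≤
      (1 / 2) * (‖ψ (e i k)‖ ^ 2 * ‖ψ (e j l)‖ ^ 2) +
      (1 / 2) * (‖ψ (e j k)‖ ^ 2 * ‖ψ (e i l)‖ ^ 2) := fun i k j l => by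
    simp only [Matrix.vecMulVec_apply, Pi.star_apply, norm_mul, norm_star]
    nlinarith [sq_nonneg (‖ψ (e i k)‖ * ‖ψ (e j l)‖ - ‖ψ (e j k)‖ * ‖ψ (e i l)‖)]
  have hone : ∑ i, ∑ k, ‖ψ (e i k)‖ ^ 2 = 1 := by rw [← hψ, sum_embedIdx α]
  calc _ ≤ ∑ i, ∑ k, ∑ j, ∑ l, ((1 / 2) * (‖ψ (e i k)‖ ^ 2 * ‖ψ (e j l)‖ ^ 2) +
      (1 / 2) * (‖ψ (e j k)‖ ^ 2 * ‖ψ (e i l)‖ ^ 2)) :=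
        norm_sum_le_of_le _ fun i _ => norm_sum_le_of_le _ fun k _ => norm_sum_le_of_le _ fun j _ =>
          norm_sum_le_of_le _ fun l _ => hterm i k j l
    _ = 1 := by
      simp only [Finset.sum_add_distrib, ← Finset.mul_sum, hone]
      have : ∑ i, ∑ k, ∑ j, ‖ψ (e j k)‖ ^ 2 * ∑ l, ‖ψ (e i l)‖ ^ 2 = 1 := by
        calc _ = ∑ i, (∑ k, ∑ j, ‖ψ (e j k)‖ ^ 2) * ∑ l, ‖ψ (e i l)‖ ^ 2 := by
              simp only [Finset.sum_mul]
          _ = 1 := by rw [← Finset.mul_sum, hone, Finset.sum_comm, hone, one_mul]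
      rw [this]
      simp only [mul_one, hone]
      norm_num

lemma prod_add_eq_sum_powerset {ι R : Type*} [Fintype ι] [DecidableEq ι] [CommSemiring R]
    (S : Finset ι) (c : R) (A B : ι → R) :
    ∏ i, (if i ∈ S then c * (A i + B i) else A i) =
      c ^ S.card * ∑ α ∈ S.powerset, ∏ i, if i ∈ α then B i else A i := by
  have h1 : ∀ i, (if i ∈ S then c * (A i + B i) else A i) =
      (if i ∈ S then c else 1) * ((if i ∈ S then B i else 0) + A i) := fun i => by
    split_ifs <;> ring
  simp only [h1, Finset.prod_mul_distrib]
  congr 1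
  · simp
  · rw [Finset.prod_add, ← Finset.sum_subset (Finset.powerset_mono.2 (Finset.subset_univ S))]
    · refine Finset.sum_congr rfl fun α hα => ?_
      rw [Finset.prod_congr rfl fun i hi => if_pos (Finset.mem_powerset.1 hα hi),
        Finset.prod_ite, Finset.filter_mem_eq_inter, Finset.univ_inter, Finset.filter_notMem_eq_sdiff]
    · intro t _ ht
      obtain ⟨i, hi, hiS⟩ := Finset.not_subset.1 (mt Finset.mem_powerset.2 ht)
      rw [Finset.prod_eq_zero hi (if_neg hiS), zero_mul]

lemma integral_bornTrace_sq {n : ℕ} (μ : Measure (Matrix.unitaryGroup (Fin 2) ℂ))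
    [μ.IsHaarMeasure] [IsProbabilityMeasure μ] (ρ : QMat n) (S : Finset (Fin n))
    (z : {i : Fin n // i ∈ S} → Fin 2) :
    ∫ V, bornTrace ρ S V z * bornTrace ρ S V z
      ∂(Measure.pi fun _ : {i : Fin n // i ∈ S} => μ) =
      (1 / 6) ^ S.card * ∑ α ∈ S.powerset, (reduced ρ α * reduced ρ α).trace := by
  have hexp : ∀ V, bornTrace ρ S V z * bornTrace ρ S V z = ∑ y, ∑ y', ∑ w, ∑ w',
      (ρ y y' * ρ w w' * ∏ i : {i // i ∉ S},
        ((if y i = y' i then 1 else 0) * if w i = w' i then 1 else 0)) *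
        ∏ i : {i // i ∈ S}, ((V i).1 (z i) (y i) * star ((V i).1 (z i) (y' i)) *
          ((V i).1 (z i) (w i) * star ((V i).1 (z i) (w' i)))) := fun V => by
    simp only [bornTrace_eq_sum, Finset.sum_mul, Finset.mul_sum, Finset.prod_mul_distrib]
    exact Finset.sum_congr rfl fun y _ => Finset.sum_congr rfl fun y' _ =>
      Finset.sum_congr rfl fun w _ => Finset.sum_congr rfl fun w' _ => by ring
  have hint : ∀ y y' w w' : Fin n → Fin 2, Integrable
      (fun V : {i : Fin n // i ∈ S} → Matrix.unitaryGroup (Fin 2) ℂ =>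
        (ρ y y' * ρ w w' * ∏ i : {i // i ∉ S},
        ((if y i = y' i then 1 else 0) * if w i = w' i then 1 else 0)) *
        ∏ i : {i // i ∈ S}, ((V i).1 (z i) (y i) * star ((V i).1 (z i) (y' i)) *
          ((V i).1 (z i) (w i) * star ((V i).1 (z i) (w' i)))))
      (Measure.pi fun _ : {i : Fin n // i ∈ S} => μ) := fun y y' w w' =>
    (Integrable.fintype_prod (𝕜 := ℂ) fun i : {i // i ∈ S} =>
      rowMoment_integrable μ (z i) (y i) (y' i) (w i) (w' i)).const_mul _
  have hval : ∀ y y' w w' : Fin n → Fin 2, ∫ V : {i : Fin n // i ∈ S} →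
        Matrix.unitaryGroup (Fin 2) ℂ,
        (ρ y y' * ρ w w' * ∏ i : {i // i ∉ S},
        ((if y i = y' i then 1 else 0) * if w i = w' i then 1 else 0)) *
        ∏ i : {i // i ∈ S}, ((V i).1 (z i) (y i) * star ((V i).1 (z i) (y' i)) *
          ((V i).1 (z i) (w i) * star ((V i).1 (z i) (w' i))))
      ∂(Measure.pi fun _ : {i : Fin n // i ∈ S} => μ) =
      (1 / 6) ^ S.card * ∑ α ∈ S.powerset, ρ y y' * ρ w w' * ∏ i, (if i ∈ α then
      (if y i = w' i then 1 else 0) * (if w i = y' i then 1 else 0) else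
      (if y i = y' i then 1 else 0) * (if w i = w' i then 1 else 0)) := fun y y' w w' => by
    rw [integral_const_mul, integral_fintype_prod_eq_prod (𝕜 := ℂ)
      (f := fun (i : {i // i ∈ S}) (U : Matrix.unitaryGroup (Fin 2) ℂ) =>
        U.1 (z i) (y i) * star (U.1 (z i) (y' i)) * (U.1 (z i) (w i) * star (U.1 (z i) (w' i))))]
    have hrow := fun i : {i // i ∈ S} => rowMoment_eq μ (z i) (y i) (y' i) (w i) (w' i)
    simp only [rowMoment] at hrow
    simp only [hrow]
    have hsplit := Fintype.prod_dite (fun i (_ : i ∈ S) => (1 / 6 : ℂ) *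
      ((if y i = y' i then 1 else 0) * (if w i = w' i then 1 else 0) +
      (if y i = w' i then 1 else 0) * (if w i = y' i then 1 else 0))) fun i _ =>
      (if y i = y' i then (1 : ℂ) else 0) * (if w i = w' i then 1 else 0)
    simp only [dite_eq_ite, prod_add_eq_sum_powerset] at hsplit
    rw [← Finset.mul_sum, mul_left_comm, hsplit, mul_assoc, mul_comm (∏ _, _)]
    congr!
  simp only [hexp]
  rw [integral_finsetSum _ fun y _ => integrable_finsetSum _ fun y' _ => integrable_finsetSum _
    fun w _ => integrable_finsetSum _ fun w' _ => hint y y' w w']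
  simp only [← trace_reduced_sq_eq_swap]
  rw [Finset.sum_comm, Finset.mul_sum]
  refine Finset.sum_congr rfl fun y _ => ?_
  rw [integral_finsetSum _ fun y' _ => integrable_finsetSum _
    fun w _ => integrable_finsetSum _ fun w' _ => hint y y' w w']
  rw [Finset.sum_comm, Finset.mul_sum]
  refine Finset.sum_congr rfl fun y' _ => ?_
  rw [integral_finsetSum _ fun w _ => integrable_finsetSum _ fun w' _ => hint y y' w w']
  rw [Finset.sum_comm, Finset.mul_sum]
  refine Finset.sum_congr rfl fun w _ => ?_
  rw [integral_finsetSum _ fun w' _ => hint y y' w w']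
  rw [Finset.sum_comm, Finset.mul_sum]
  exact Finset.sum_congr rfl fun w' _ => hval y y' w w'

section Round

open scoped ComplexOrder

lemma measurable_born {n : ℕ} (ρ : QMat n) (S : Finset (Fin n))
    (z : {i : Fin n // i ∈ S} → Fin 2) : Measurable fun V => born ρ S V z := by
  have hentry : ∀ (i : {i : Fin n // i ∈ S}) (a b : Fin 2),
      Measurable fun V : {i : Fin n // i ∈ S} → Matrix.unitaryGroup (Fin 2) ℂ =>
        (V i).1 a b := fun i a b =>
    (continuous_unitary_entry a b).measurable.comp (measurable_pi_apply i)
  have h : Measurable fun V => bornTrace ρ S V z := by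
    simp only [bornTrace_eq_sum]
    exact Finset.measurable_fun_sum _ fun y _ => Finset.measurable_fun_sum _ fun y' _ =>
      ((Finset.measurable_fun_prod _ fun i _ => (hentry i _ _).mul
        (continuous_star.measurable.comp (hentry i _ _))).const_mul _).const_mul _
  exact Complex.measurable_re.comp h

lemma bornMeasure_singleton {n : ℕ} (ρ : QMat n) (S : Finset (Fin n))
    (V : {i : Fin n // i ∈ S} → Matrix.unitaryGroup (Fin 2) ℂ)
    (z : {i : Fin n // i ∈ S} → Fin 2) :
    bornMeasure ρ S V {z} = ENNReal.ofReal (born ρ S V z) := by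
  simp [bornMeasure, Measure.finsetSum_apply, Set.indicator_apply]

lemma isProbabilityMeasure_bornMeasure {n : ℕ} {ρ : QMat n} (hρ : ρ.PosSemidef)
    (hρ1 : ρ.trace = 1) (S : Finset (Fin n))
    (V : {i : Fin n // i ∈ S} → Matrix.unitaryGroup (Fin 2) ℂ) :
    IsProbabilityMeasure (bornMeasure ρ S V) := by
  refine ⟨?_⟩
  simp only [bornMeasure, Measure.finsetSum_apply, Measure.smul_apply, measure_univ, smul_eq_mul,
    mul_one]
  rw [← ENNReal.ofReal_sum_of_nonneg fun z _ => born_nonneg hρ S V z, sum_born hρ1,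
    ENNReal.ofReal_one]

lemma pi_bornMeasure_apply {n : ℕ} {ρ : QMat n} (hρ : ρ.PosSemidef)
    (hρ1 : ρ.trace = 1) (S : Finset (Fin n)) (K : ℕ)
    (V : {i : Fin n // i ∈ S} → Matrix.unitaryGroup (Fin 2) ℂ)
    (t : Set (Fin K → {i : Fin n // i ∈ S} → Fin 2)) :
    Measure.pi (fun _ : Fin K => bornMeasure ρ S V) t =
      ∑ w, t.indicator 1 w * ∏ k, ENNReal.ofReal (born ρ S V (w k)) := by
  have := isProbabilityMeasure_bornMeasure hρ hρ1 S V
  rw [← lintegral_indicator_one (Set.toFinite t).measurableSet, lintegral_fintype]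
  simp only [Measure.pi_singleton, bornMeasure_singleton]

lemma measurable_map_pi_bornMeasure {n : ℕ} {ρ : QMat n} (hρ : ρ.PosSemidef)
    (hρ1 : ρ.trace = 1) (S : Finset (Fin n)) (K : ℕ) :
    Measurable fun V => (Measure.pi fun _ : Fin K => bornMeasure ρ S V).map (Prod.mk V) := by
  refine Measure.measurable_of_measurable_coe _ fun s hs => ?_
  simp only [Measure.map_apply measurable_prodMk_left hs, pi_bornMeasure_apply hρ hρ1]
  refine Finset.measurable_fun_sum _ fun w _ => Measurable.mul ?_ ?_
  · exact measurable_one.indicator (measurable_prodMk_right (y := w) hs)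
  · exact Finset.measurable_fun_prod _ fun k _ => (measurable_born ρ S (w k)).ennreal_ofReal

lemma isProbabilityMeasure_jointRound {n : ℕ} (μ : Measure (Matrix.unitaryGroup (Fin 2) ℂ))
    [IsProbabilityMeasure μ] {ρ : QMat n} (hρ : ρ.PosSemidef) (hρ1 : ρ.trace = 1)
    (S : Finset (Fin n)) (K : ℕ) : IsProbabilityMeasure (jointRound μ ρ S K) := by
  refine isProbabilityMeasure_bind (measurable_map_pi_bornMeasure hρ hρ1 S K).aemeasurable
    (.of_forall fun V => ?_)
  have := isProbabilityMeasure_bornMeasure hρ hρ1 S V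
  exact Measure.isProbabilityMeasure_map measurable_prodMk_left.aemeasurable

lemma measurableSet_collision {n : ℕ} (S : Finset (Fin n)) :
    MeasurableSet {ω : ({i : Fin n // i ∈ S} → Matrix.unitaryGroup (Fin 2) ℂ) ×
      (Fin 2 → ({i : Fin n // i ∈ S} → Fin 2)) | ω.2 0 = ω.2 1} :=
  measurableSet_eq_fun (by fun_prop) (by fun_prop)

/-- The collision probability of two shots in one round determines the average purity. -/
lemma jointRound_collision {n : ℕ} (μ : Measure (Matrix.unitaryGroup (Fin 2) ℂ))
    [μ.IsHaarMeasure] [IsProbabilityMeasure μ] {ρ : QMat n} (hρ : ρ.PosSemidef)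
    (hρ1 : ρ.trace = 1) (S : Finset (Fin n)) :
    (jointRound μ ρ S 2).real {ω | ω.2 0 = ω.2 1} =
      (1 / 3) ^ S.card * ∑ α ∈ S.powerset, (reduced ρ α * reduced ρ α).trace.re := by
  have hcond : ∀ V, (Measure.pi fun _ : Fin 2 => bornMeasure ρ S V).map (Prod.mk V)
      {ω | ω.2 0 = ω.2 1} = ENNReal.ofReal (∑ z, born ρ S V z * born ρ S V z) := fun V => by
    rw [Measure.map_apply measurable_prodMk_left (measurableSet_collision S),
      pi_bornMeasure_apply hρ hρ1,
      ENNReal.ofReal_sum_of_nonneg fun z _ => mul_self_nonneg _,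
      ← (finTwoArrowEquiv _).symm.sum_comp, Fintype.sum_prod_type]
    refine Finset.sum_congr rfl fun z _ => ?_
    rw [Finset.sum_eq_single z]
    · rw [Set.indicator_of_mem (by simp [finTwoArrowEquiv])]
      simp [finTwoArrowEquiv, ENNReal.ofReal_mul (born_nonneg hρ S V z)]
    · intro z' _ h
      simp [finTwoArrowEquiv, h.symm]
    · simp
  have hbound : ∀ V z, born ρ S V z ≤ 1 := fun V z => by
    rw [← sum_born hρ1 S V]
    exact Finset.single_le_sum (fun z _ => born_nonneg hρ S V z) (Finset.mem_univ z)
  have hint : ∀ z, Integrable (fun V => born ρ S V z * born ρ S V z)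
      (Measure.pi fun _ : {i : Fin n // i ∈ S} => μ) := fun z =>
    Integrable.of_bound ((measurable_born ρ S z).mul (measurable_born ρ S z)).aestronglyMeasurable
      1 (.of_forall fun V => by
        rw [Real.norm_of_nonneg (mul_self_nonneg _)]
        exact mul_le_one₀ (hbound V z) (born_nonneg hρ S V z) (hbound V z))
  have hreal : ∀ z, ∫ V, born ρ S V z * born ρ S V z
      ∂(Measure.pi fun _ : {i : Fin n // i ∈ S} => μ) =
      (1 / 6) ^ S.card * ∑ α ∈ S.powerset, (reduced ρ α * reduced ρ α).trace.re := fun z => by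
    have h := congrArg Complex.re (integral_bornTrace_sq μ ρ S z)
    simp only [← ofReal_born hρ, ← Complex.ofReal_mul] at h
    rw [integral_complex_ofReal, Complex.ofReal_re] at h
    rw [h, show ((1 / 6 : ℂ) ^ S.card) = ((1 / 6 : ℝ) ^ S.card : ℝ) by push_cast; rfl,
      Complex.re_ofReal_mul, Complex.re_sum]
  rw [measureReal_def, jointRound, Measure.bind_apply (measurableSet_collision S)
    (measurable_map_pi_bornMeasure hρ hρ1 S 2).aemeasurable]
  simp only [hcond]
  rw [← ofReal_integral_eq_lintegral_ofReal (integrable_finsetSum _ fun z _ => hint z)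
      (.of_forall fun V => Finset.sum_nonneg fun z _ => mul_self_nonneg _),
    ENNReal.toReal_ofReal (integral_nonneg fun V => Finset.sum_nonneg fun z _ => mul_self_nonneg _),
    integral_finsetSum _ fun z _ => hint z]
  simp only [hreal, Finset.sum_const, Finset.card_univ, Fintype.card_pi, Fintype.card_fin,
    Finset.prod_const, Fintype.card_coe, nsmul_eq_mul]
  rw [← mul_assoc]
  push_cast
  rw [← mul_pow]
  norm_num

end Round

section Estimator

open scoped ComplexOrder

/-- The single-round estimator of the concentratable entanglement. -/
noncomputable def collisionEstimator {n : ℕ} (S : Finset (Fin n))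
    (ω : ({i : Fin n // i ∈ S} → Matrix.unitaryGroup (Fin 2) ℂ) ×
      (Fin 2 → ({i : Fin n // i ∈ S} → Fin 2))) : ℝ :=
  1 - (3 / 2 : ℝ) ^ S.card * if ω.2 0 = ω.2 1 then 1 else 0

lemma measurable_collisionEstimator {n : ℕ} (S : Finset (Fin n)) :
    Measurable (collisionEstimator S) :=
  measurable_const.sub ((Measurable.ite (measurableSet_collision S) measurable_const
    measurable_const).const_mul _)

lemma collisionEstimator_mem_Icc {n : ℕ} (S : Finset (Fin n)) (ω) :
    collisionEstimator S ω ∈ Set.Icc (1 - (3 / 2 : ℝ) ^ S.card) 1 := by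
  have h : (0 : ℝ) ≤ (3 / 2) ^ S.card := by positivity
  rw [collisionEstimator]
  split_ifs <;> constructor <;> linarith

lemma memLp_collisionEstimator {n : ℕ} (S : Finset (Fin n)) (ν : Measure _) [IsFiniteMeasure ν] :
    MemLp (collisionEstimator S) 2 ν :=
  memLp_of_bounded (.of_forall (collisionEstimator_mem_Icc S))
    (measurable_collisionEstimator S).aestronglyMeasurable 2

lemma integral_collisionEstimator {n : ℕ} (μ : Measure (Matrix.unitaryGroup (Fin 2) ℂ))
    [μ.IsHaarMeasure] [IsProbabilityMeasure μ] {ρ : QMat n} (hρ : ρ.PosSemidef)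
    (hρ1 : ρ.trace = 1) (S : Finset (Fin n)) :
    ∫ ω, collisionEstimator S ω ∂jointRound μ ρ S 2 = CE ρ S := by
  have := isProbabilityMeasure_jointRound μ hρ hρ1 S 2
  have hind : ∀ ω : ({i : Fin n // i ∈ S} → Matrix.unitaryGroup (Fin 2) ℂ) ×
      (Fin 2 → ({i : Fin n // i ∈ S} → Fin 2)), (if ω.2 0 = ω.2 1 then (1 : ℝ) else 0) =
      Set.indicator {ω | ω.2 0 = ω.2 1} 1 ω := fun ω => by
    simp [Set.indicator_apply]
  simp only [collisionEstimator, hind]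
  rw [integral_sub (integrable_const _) (((integrable_const 1).indicator
    (measurableSet_collision S)).const_mul _), integral_const_mul,
    integral_indicator_one (measurableSet_collision S), jointRound_collision μ hρ hρ1, CE,
    ← mul_assoc, ← mul_pow]
  norm_num

/-- For a pure state the variance of the single-round estimator is at most `(3/2)^s`. -/
lemma variance_collisionEstimator_le {n : ℕ} (μ : Measure (Matrix.unitaryGroup (Fin 2) ℂ))
    [μ.IsHaarMeasure] [IsProbabilityMeasure μ] (ψ : (Fin n → Fin 2) → ℂ)
    (hψ : ∑ x, ‖ψ x‖ ^ 2 = 1) (hρ1 : (Matrix.vecMulVec ψ (star ψ)).trace = 1)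
    (S : Finset (Fin n)) :
    ProbabilityTheory.variance (collisionEstimator S)
      (jointRound μ (Matrix.vecMulVec ψ (star ψ)) S 2) ≤ (3 / 2 : ℝ) ^ S.card := by
  have hρ := Matrix.posSemidef_vecMulVec_self_star ψ
  have := isProbabilityMeasure_jointRound μ hρ hρ1 S 2
  have hmean := integral_mono (μ := jointRound μ (Matrix.vecMulVec ψ (star ψ)) S 2)
    ((memLp_collisionEstimator S _).integrable (by norm_num)) (integrable_const (1 : ℝ))
    fun ω => (collisionEstimator_mem_Icc S ω).2
  refine (ProbabilityTheory.variance_le_sub_mul_sub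
    (.of_forall (collisionEstimator_mem_Icc S))
    (measurable_collisionEstimator S).aemeasurable).trans ?_
  simp only [integral_const, probReal_univ, one_smul] at hmean
  have hCE : 0 ≤ CE (Matrix.vecMulVec ψ (star ψ)) S := by
    have hsum := Finset.sum_le_card_nsmul S.powerset _ 1 fun α _ => purity_le_one ψ hψ α
    rw [Finset.card_powerset, nsmul_eq_mul, mul_one, Nat.cast_pow, Nat.cast_ofNat] at hsum
    have := mul_le_mul_of_nonneg_left hsum (by positivity : (0 : ℝ) ≤ (1 / 2) ^ S.card)
    rw [← mul_pow, one_div_mul_cancel two_ne_zero, one_pow] at this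
    exact sub_nonneg.2 this
  rw [integral_collisionEstimator μ hρ hρ1] at hmean ⊢
  have h : (1 : ℝ) ≤ (3 / 2) ^ S.card := one_le_pow₀ (by norm_num)
  nlinarith [mul_nonneg hCE (sub_nonneg.2 hmean), mul_nonneg hCE (sub_nonneg.2 h)]

end Estimator

/-- **CE estimation via median-of-means and LRMs**: with `N_B = ⌈8 log(1/δ)⌉` batches of
`B = ⌈4(3/2)^s/ε²⌉` rounds (two shots per random unitary), any median of the batch means is
`ε`-close to `C_ψ(S)` with probability at least `1 - δ`. -/
theorem LRM_MoM_estimator (n : ℕ) (ψ : (Fin n → Fin 2) → ℂ)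
    (hψ : (∑ x, star (ψ x) * ψ x) = 1)
    (S : Finset (Fin n)) (hS : S.Nonempty)
    (μ : Measure (Matrix.unitaryGroup (Fin 2) ℂ)) [μ.IsHaarMeasure] [IsProbabilityMeasure μ]
    (ε δ : ℝ) (hε : 0 < ε) (hδ0 : 0 < δ) (hδ1 : δ < 1) (NB B : ℕ)
    (hNB : NB = ⌈8 * Real.log (1 / δ)⌉₊)
    (hB : B = ⌈4 * (3 / 2 : ℝ) ^ S.card / ε ^ 2⌉₊)
    (med : (Fin NB → ℝ) → ℝ) (hmed : ∀ x, IsMedian x (med x)) :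
    (Measure.pi fun _ : Fin NB × Fin B => jointRound μ (Matrix.vecMulVec ψ (star ψ)) S 2)
      {ω | ε ≤ |med (fun b => 1 - (3 / 2 : ℝ) ^ S.card *
              ((1 / (B : ℝ)) * ∑ l : Fin B, if (ω (b, l)).2 0 = (ω (b, l)).2 1 then 1 else 0))
            - CE (Matrix.vecMulVec ψ (star ψ)) S|}
      ≤ ENNReal.ofReal δ := by
  have hρ := open scoped ComplexOrder in Matrix.posSemidef_vecMulVec_self_star ψ
  have hρ1 : (Matrix.vecMulVec ψ (star ψ)).trace = 1 := by
    rw [← hψ]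
    simp [Matrix.trace, Matrix.vecMulVec_apply, mul_comm]
  have hnorm : ∑ x, ‖ψ x‖ ^ 2 = 1 := by
    have h : ((∑ x, ‖ψ x‖ ^ 2 : ℝ) : ℂ) = 1 := by
      rw [← hψ]
      push_cast
      exact Finset.sum_congr rfl fun x _ => (Complex.conj_mul' (ψ x)).symm
    exact_mod_cast h
  have := isProbabilityMeasure_jointRound μ hρ hρ1 S 2
  have hB_le : 4 * (3 / 2 : ℝ) ^ S.card / ε ^ 2 ≤ B := hB ▸ Nat.le_ceil _
  have hB_pos : 0 < B := hB ▸ Nat.ceil_pos.2 (by positivity)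
  have hvar := variance_collisionEstimator_le μ ψ hnorm hρ1 S
  have hmean : ∀ ω : Fin NB × Fin B → _, (fun b => (1 / (B : ℝ)) *
      ∑ l, collisionEstimator S (ω (b, l))) = fun b => 1 - (3 / 2 : ℝ) ^ S.card *
      ((1 / (B : ℝ)) * ∑ l : Fin B, if (ω (b, l)).2 0 = (ω (b, l)).2 1 then 1 else 0) := fun ω => by
    funext b
    simp only [collisionEstimator, Finset.sum_sub_distrib, ← Finset.mul_sum, Finset.sum_const,
      Finset.card_univ, Fintype.card_fin, nsmul_eq_mul]
    field_simp
  have h := medianOfMeans_le (jointRound μ (Matrix.vecMulVec ψ (star ψ)) S 2)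
    (measurable_collisionEstimator S) (memLp_collisionEstimator S _) hε hδ0
    (hNB ▸ Nat.le_ceil _) hB_pos
    (by rw [div_le_iff₀ (by positivity)] at hB_le; linarith) med hmed
  simpa only [integral_collisionEstimator μ hρ hρ1, hmean] using h
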